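/- For any set S of pairwise disjoint sub-problems of the capacitated single-item lot-sizing problem, the sum over i in S of a lower bound w_i on the optimal cost of sub-problem i is a lower bound on the optimal cost C of the full problem. -/

import Mathlib

/-- Feasibility of a production plan `(X, I)` for the capacitated single-item
lot-sizing problem over periods `1..T` with demands `d`, production capacities
`ahi` and inventory capacities `bhi` (no lower bounds), `I 0 = I T = 0`. -/
def Feasible (T : ℕ) (d ahi bhi : ℕ → ℕ) (X I : ℕ → ℕ) : Prop :=
  I 0 = 0 ∧ I T = 0 ∧
  ∀ t ∈ Finset.Icc 1 T, I (t - 1) + X t = d t + I t ∧ X t ≤ ahi t ∧ I t ≤ bhi t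

/-- Total cost `Σ (p_t X_t + h_t I_t + s_t·[X_t > 0])`. -/
def planCost (T : ℕ) (p h s : ℕ → ℕ) (X I : ℕ → ℕ) : ℕ :=
  ∑ t ∈ Finset.Icc 1 T, (p t * X t + h t * I t + if 0 < X t then s t else 0)

/-- Demands of sub-problem `(L_{u,v})`: zero outside `[u, v]`. -/
def subd (u v : ℕ) (d : ℕ → ℕ) : ℕ → ℕ := fun t => if t ∈ Finset.Icc u v then d t else 0

/-- Setup costs of sub-problem `(L_{u,v})`: zero outside `[u, v]`. -/
def subs (u v : ℕ) (s : ℕ → ℕ) : ℕ → ℕ := fun t => if t ∈ Finset.Icc u v then s t else 0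

/-- Total demand of the periods `0..t`. -/
def cumDemand (d : ℕ → ℕ) (t : ℕ) : ℕ := ∑ k ∈ Finset.range (t + 1), d k

/-- The number of integers in `[x, y) ∩ [a, b)`. -/
def overlap (a b x y : ℕ) : ℕ := (Finset.Ico x y ∩ Finset.Ico a b).card

/-- The part of production `X` that serves the demand of `[u, v]` when stock is
consumed first in, first out. -/
def subProduction (d I : ℕ → ℕ) (u v t : ℕ) : ℕ :=
  overlap (cumDemand d (u - 1)) (cumDemand d v)
    (I (t - 1) + cumDemand d (t - 1)) (I t + cumDemand d t)

/-- The part of inventory `I` that serves the demand of `[u, v]` when stock is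
consumed first in, first out. -/
def subInventory (d I : ℕ → ℕ) (u v t : ℕ) : ℕ :=
  overlap (cumDemand d (u - 1)) (cumDemand d v) (cumDemand d t) (I t + cumDemand d t)

theorem overlap_eq (a b x y : ℕ) : overlap a b x y = min y b - max x a := by
  simp [overlap, Finset.Ico_inter_Ico]

theorem overlap_le (a b x y : ℕ) : overlap a b x y ≤ y - x := by
  rw [overlap_eq]
  omega

theorem overlap_add {a b x y z : ℕ} (hxy : x ≤ y) (hyz : y ≤ z) :
    overlap a b x y + overlap a b y z = overlap a b x z := by
  simp only [overlap_eq]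
  omega

theorem sum_overlap_le {ι : Type*} (S : Finset ι) (a b : ι → ℕ)
    (h : ∀ i ∈ S, ∀ j ∈ S, i ≠ j → Disjoint (Finset.Ico (a i) (b i)) (Finset.Ico (a j) (b j)))
    (x y : ℕ) : ∑ i ∈ S, overlap (a i) (b i) x y ≤ y - x := by
  classical
  unfold overlap
  rw [← Finset.card_biUnion, ← Nat.card_Ico]
  · exact Finset.card_le_card (Finset.biUnion_subset.2 fun _ _ => Finset.inter_subset_left)
  · intro i hi j hj hij
    exact (h i hi j hj hij).mono Finset.inter_subset_right Finset.inter_subset_right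

theorem cumDemand_mono (d : ℕ → ℕ) : Monotone (cumDemand d) := fun _ _ h =>
  Finset.sum_le_sum_of_subset (Finset.range_subset_range.2 (by omega))

theorem cumDemand_pred_add (d : ℕ → ℕ) {t : ℕ} (ht : 1 ≤ t) :
    cumDemand d (t - 1) + d t = cumDemand d t := by
  obtain ⟨n, rfl⟩ := Nat.exists_eq_add_of_le' ht
  exact (Finset.sum_range_succ d (n + 1)).symm

theorem overlap_cumDemand (d : ℕ → ℕ) {u v t : ℕ} (ht : 1 ≤ t) :
    overlap (cumDemand d (u - 1)) (cumDemand d v) (cumDemand d (t - 1)) (cumDemand d t) =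
      subd u v d t := by
  have hd := cumDemand_pred_add d ht
  rw [overlap_eq, subd]
  split_ifs with h
  · rw [Finset.mem_Icc] at h
    have h₁ := cumDemand_mono d (show u - 1 ≤ t - 1 by omega)
    have h₂ := cumDemand_mono d h.2
    omega
  · rw [Finset.mem_Icc] at h
    rcases (by omega : t ≤ u - 1 ∨ v ≤ t - 1) with h' | h'
    · have := cumDemand_mono d h'
      omega
    · have := cumDemand_mono d h'
      omega

theorem disjoint_cumDemand_Ico (d : ℕ → ℕ) {u v u' v' : ℕ} (huv : u ≤ v) (huv' : u' ≤ v')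
    (h : Finset.Icc u v ∩ Finset.Icc u' v' = ∅) :
    Disjoint (Finset.Ico (cumDemand d (u - 1)) (cumDemand d v))
      (Finset.Ico (cumDemand d (u' - 1)) (cumDemand d v')) := by
  have hsep : v < u' ∨ v' < u := by
    by_contra! hc
    have : max u u' ∈ Finset.Icc u v ∩ Finset.Icc u' v' := by
      simp only [Finset.mem_inter, Finset.mem_Icc]
      omega
    simp [h] at this
  rw [Finset.disjoint_left]
  intro n hn hn'
  rw [Finset.mem_Ico] at hn hn'
  rcases hsep with h' | h'
  · have := cumDemand_mono d (show v ≤ u' - 1 by omega)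
    omega
  · have := cumDemand_mono d (show v' ≤ u - 1 by omega)
    omega

theorem Feasible.sub {T : ℕ} {d ahi bhi X I : ℕ → ℕ} (hXI : Feasible T d ahi bhi X I)
    (u v : ℕ) :
    Feasible T (subd u v d) ahi bhi (subProduction d I u v) (subInventory d I u v) := by
  obtain ⟨h0, hT, hflow⟩ := hXI
  refine ⟨?_, ?_, fun t ht => ?_⟩
  · simp [subInventory, overlap, h0]
  · simp [subInventory, overlap, hT]
  obtain ⟨hbal, hX, hI⟩ := hflow t ht
  have ht1 := (Finset.mem_Icc.1 ht).1
  have hd := cumDemand_pred_add d ht1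
  refine ⟨?_, (overlap_le _ _ _ _).trans (by omega), (overlap_le _ _ _ _).trans (by omega)⟩
  rw [← overlap_cumDemand d ht1, subInventory, subProduction, subInventory,
    overlap_add (by omega) (by omega), overlap_add (by omega) (by omega)]

theorem sum_subs_le (S : Finset (ℕ × ℕ))
    (hdisj : ∀ i ∈ S, ∀ j ∈ S, i ≠ j → Finset.Icc i.1 i.2 ∩ Finset.Icc j.1 j.2 = ∅)
    (s : ℕ → ℕ) (t : ℕ) : ∑ i ∈ S, subs i.1 i.2 s t ≤ s t := by
  simp only [subs]
  rw [← Finset.sum_filter, Finset.sum_const, smul_eq_mul]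
  refine mul_le_of_le_one_left (Nat.zero_le _) ?_
  refine Finset.card_le_one.2 fun i hi j hj => ?_
  rw [Finset.mem_filter] at hi hj
  by_contra hij
  have := Finset.mem_inter.2 ⟨hi.2, hj.2⟩
  simp [hdisj i hi.1 j hj.1 hij] at this

/-- For any set `S` of pairwise disjoint sub-problems `(L_{u,v})`, the sum of lower
bounds `w i` on the optimal costs of the sub-problems is a lower bound on the
(optimal) cost of the full problem `(L)`. -/
theorem wisp_sum_lower_bound
    (T : ℕ) (d p h s ahi bhi : ℕ → ℕ)
    (S : Finset (ℕ × ℕ))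
    (hS : ∀ i ∈ S, 1 ≤ i.1 ∧ i.1 < i.2 ∧ i.2 ≤ T)
    (hdisj : ∀ i ∈ S, ∀ j ∈ S, i ≠ j →
      Finset.Icc i.1 i.2 ∩ Finset.Icc j.1 j.2 = ∅)
    (w : ℕ × ℕ → ℕ)
    (hw : ∀ i ∈ S, ∀ X' I' : ℕ → ℕ,
      Feasible T (subd i.1 i.2 d) ahi bhi X' I' →
      w i ≤ planCost T p h (subs i.1 i.2 s) X' I')
    (X I : ℕ → ℕ) (hXI : Feasible T d ahi bhi X I) :
    ∑ i ∈ S, w i ≤ planCost T p h s X I := by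
  have hIco : ∀ i ∈ S, ∀ j ∈ S, i ≠ j →
      Disjoint (Finset.Ico (cumDemand d (i.1 - 1)) (cumDemand d i.2))
        (Finset.Ico (cumDemand d (j.1 - 1)) (cumDemand d j.2)) := fun i hi j hj hij =>
    disjoint_cumDemand_Ico d (hS i hi).2.1.le (hS j hj).2.1.le (hdisj i hi j hj hij)
  refine (Finset.sum_le_sum fun i hi => hw i hi _ _ (hXI.sub i.1 i.2)).trans ?_
  unfold planCost
  rw [Finset.sum_comm]
  refine Finset.sum_le_sum fun t ht => ?_
  have hbal := (hXI.2.2 t ht).1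
  have hd := cumDemand_pred_add d (Finset.mem_Icc.1 ht).1
  have hXsum : ∑ i ∈ S, subProduction d I i.1 i.2 t ≤ X t :=
    (sum_overlap_le S _ _ hIco _ _).trans (by omega)
  have hIsum : ∑ i ∈ S, subInventory d I i.1 i.2 t ≤ I t :=
    (sum_overlap_le S _ _ hIco _ _).trans (by omega)
  rw [Finset.sum_add_distrib, Finset.sum_add_distrib, ← Finset.mul_sum, ← Finset.mul_sum]
  gcongr
  split_ifs with hX
  · refine le_trans (Finset.sum_le_sum fun i _ => ?_) (sum_subs_le S hdisj s t)
    split_ifs <;> simp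
  · refine (Finset.sum_eq_zero fun i hi => if_neg ?_).le
    have := Finset.single_le_sum (f := fun i : ℕ × ℕ => subProduction d I i.1 i.2 t)
      (fun _ _ => Nat.zero_le _) hi
    omega
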